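/- Let k, ℓ ≥ 1 with k ≠ ℓ. For all u, v ∈ ℕ (not necessarily distinct) and for every choice of X ∈ {R_k, T_k} and Y ∈ {R_ℓ, T_ℓ}, there exists w ∈ ℕ with (w,u) ∈ X and (w,v) ∈ Y. -/

import Mathlib

/-- For `k ≥ 1`, the relation `R_k ⊆ ℕ × ℕ`: `(u,v) ∈ R_k` iff
`v = 2^u·3^j` or `v = 2^j·3^u` for some `j`, or `u = 2^v·3^j` or `u = 2^j·3^v`
for some `j`, or `u = 2^v·5^k`. -/
def Rk (k : ℕ) : Set (ℕ × ℕ) :=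
  {p | (∃ j : ℕ, p.2 = 2 ^ p.1 * 3 ^ j ∨ p.2 = 2 ^ j * 3 ^ p.1) ∨
       (∃ j : ℕ, p.1 = 2 ^ p.2 * 3 ^ j ∨ p.1 = 2 ^ j * 3 ^ p.2) ∨
       p.1 = 2 ^ p.2 * 5 ^ k}

/-- `T_k = (ℕ × ℕ) ∖ R_k`. -/
def Tk (k : ℕ) : Set (ℕ × ℕ) := (Rk k)ᶜ

/-!
For `(w, v)` the clauses `v = 2 ^ w * 3 ^ j` and `v = 2 ^ j * 3 ^ w` of `R_k` force `w < v`,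
so for a large `w = 2 ^ a * 3 ^ b * 5 ^ c` unique factorization turns `(w, v) ∈ R_k` into a
condition on the exponents: `c = 0` and `v ∈ {a, b}`, or `(a, b, c) = (v, 0, k)`.
The second alternative alone depends on `k`, and it separates `R_k` from `R_ℓ` over the same `v`.
-/

theorem prime_pow_mul_prime_pow_mul_prime_pow_inj {p q r : ℕ} (hp : p.Prime) (hq : q.Prime)
    (hr : r.Prime) (hpq : p ≠ q) (hpr : p ≠ r) (hqr : q ≠ r) {a b c a' b' c' : ℕ} :
    p ^ a * q ^ b * r ^ c = p ^ a' * q ^ b' * r ^ c' ↔ a = a' ∧ b = b' ∧ c = c' := by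
  refine ⟨fun h ↦ ?_, by rintro ⟨rfl, rfl, rfl⟩; rfl⟩
  have factorization_eq (x y z : ℕ) : (p ^ x * q ^ y * r ^ z).factorization =
      Finsupp.single p x + Finsupp.single q y + Finsupp.single r z := by
    have hx : p ^ x ≠ 0 := pow_ne_zero x hp.ne_zero
    have hy : q ^ y ≠ 0 := pow_ne_zero y hq.ne_zero
    have hz : r ^ z ≠ 0 := pow_ne_zero z hr.ne_zero
    rw [Nat.factorization_mul (mul_ne_zero hx hy) hz, Nat.factorization_mul hx hy,
      hp.factorization_pow, hq.factorization_pow, hr.factorization_pow]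
  have h_single := congrArg Nat.factorization h
  rw [factorization_eq, factorization_eq] at h_single
  refine ⟨?_, ?_, ?_⟩
  · simpa [hpq, hpr] using DFunLike.congr_fun h_single p
  · simpa [hpq.symm, hqr] using DFunLike.congr_fun h_single q
  · simpa [hpr.symm, hqr.symm] using DFunLike.congr_fun h_single r

theorem mem_Rk_iff_of_lt {k v w : ℕ} (hvw : v < w) :
    (w, v) ∈ Rk k ↔ (∃ j, w = 2 ^ v * 3 ^ j ∨ w = 2 ^ j * 3 ^ v) ∨ w = 2 ^ v * 5 ^ k := by
  refine or_iff_right ?_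
  rintro ⟨j, h | h⟩
  · have : w < 2 ^ w * 3 ^ j :=
      Nat.lt_two_pow_self.trans_le (Nat.le_mul_of_pos_right _ (by positivity))
    exact (hvw.trans this).ne h
  · have : w < 2 ^ j * 3 ^ w :=
      (Nat.lt_pow_self (by norm_num)).trans_le (Nat.le_mul_of_pos_left _ (by positivity))
    exact (hvw.trans this).ne h

theorem two_pow_mul_three_pow_mul_five_pow_mem_Rk_iff {k v a b c : ℕ}
    (hv : v < 2 ^ a * 3 ^ b * 5 ^ c) :
    (2 ^ a * 3 ^ b * 5 ^ c, v) ∈ Rk k ↔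
      c = 0 ∧ (a = v ∨ b = v) ∨ a = v ∧ b = 0 ∧ c = k := by
  have eq_iff (x y z : ℕ) : 2 ^ a * 3 ^ b * 5 ^ c = 2 ^ x * 3 ^ y * 5 ^ z ↔
      a = x ∧ b = y ∧ c = z :=
    prime_pow_mul_prime_pow_mul_prime_pow_inj Nat.prime_two Nat.prime_three Nat.prime_five
      (by norm_num) (by norm_num) (by norm_num)
  have eq_two_three (x y : ℕ) : 2 ^ a * 3 ^ b * 5 ^ c = 2 ^ x * 3 ^ y ↔
      a = x ∧ b = y ∧ c = 0 := by
    simpa only [pow_zero, mul_one] using eq_iff x y 0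
  have eq_two_five (x z : ℕ) : 2 ^ a * 3 ^ b * 5 ^ c = 2 ^ x * 5 ^ z ↔
      a = x ∧ b = 0 ∧ c = z := by
    simpa only [pow_zero, mul_one] using eq_iff x 0 z
  simp only [mem_Rk_iff_of_lt hv, eq_two_three, eq_two_five]
  grind

theorem exists_mem_Rk_mem_Rk (k l u v : ℕ) : ∃ w, (w, u) ∈ Rk k ∧ (w, v) ∈ Rk l :=
  ⟨2 ^ u * 3 ^ v, .inr (.inl ⟨v, .inl rfl⟩), .inr (.inl ⟨u, .inr rfl⟩)⟩

theorem exists_mem_Rk_notMem_Rk {k l : ℕ} (hk : k ≠ 0) (hkl : k ≠ l) (u v : ℕ) :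
    ∃ w, (w, u) ∈ Rk k ∧ (w, v) ∉ Rk l := by
  rcases eq_or_ne u v with rfl | huv
  · have hu : u < 2 ^ u * 3 ^ 0 * 5 ^ k := by
      rw [pow_zero, mul_one]
      exact Nat.lt_two_pow_self.trans_le (Nat.le_mul_of_pos_right _ (by positivity))
    refine ⟨2 ^ u * 3 ^ 0 * 5 ^ k, ?_, ?_⟩ <;>
      rw [two_pow_mul_three_pow_mul_five_pow_mem_Rk_iff hu] <;> omega
  · have hv : v < 2 ^ u * 3 ^ (v + 1) * 5 ^ 0 := by
      rw [pow_zero, mul_one]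
      calc
        v < v + 1 := v.lt_succ_self
        _ < 3 ^ (v + 1) := Nat.lt_pow_self (by norm_num)
        _ ≤ 2 ^ u * 3 ^ (v + 1) := Nat.le_mul_of_pos_left _ (by positivity)
    refine ⟨2 ^ u * 3 ^ (v + 1) * 5 ^ 0, .inr (.inl ⟨v + 1, .inl (mul_one _)⟩), ?_⟩
    rw [two_pow_mul_three_pow_mul_five_pow_mem_Rk_iff hv]
    omega

theorem exists_notMem_Rk_notMem_Rk (k l u v : ℕ) : ∃ w, (w, u) ∉ Rk k ∧ (w, v) ∉ Rk l := by
  -- A number divisible by both `3` and `5` violates both conditions on the exponents.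
  set w := 2 ^ 0 * 3 ^ 1 * 5 ^ (u + v + 1) with hw
  have hlt : u + v + 1 < w := by
    have : u + v + 1 < 5 ^ (u + v + 1) := Nat.lt_pow_self (by norm_num)
    omega
  refine ⟨w, ?_, ?_⟩ <;>
    rw [hw, two_pow_mul_three_pow_mul_five_pow_mem_Rk_iff (by omega)] <;> omega

/-- For `k, ℓ ≥ 1` with `k ≠ ℓ`, all `u, v ∈ ℕ` (not necessarily distinct)
and every choice of `X ∈ {R_k, T_k}` and `Y ∈ {R_ℓ, T_ℓ}`, there is `w` with
`(w,u) ∈ X` and `(w,v) ∈ Y`. -/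
theorem stmt_9 (k l : ℕ) (hk : 1 ≤ k) (hl : 1 ≤ l) (hkl : k ≠ l) (u v : ℕ)
    (X Y : Set (ℕ × ℕ)) (hX : X = Rk k ∨ X = Tk k) (hY : Y = Rk l ∨ Y = Tk l) :
    ∃ w : ℕ, (w, u) ∈ X ∧ (w, v) ∈ Y := by
  rcases hX with rfl | rfl <;> rcases hY with rfl | rfl
  · exact exists_mem_Rk_mem_Rk k l u v
  · exact exists_mem_Rk_notMem_Rk (Nat.one_le_iff_ne_zero.mp hk) hkl u v
  · obtain ⟨w, hv, hu⟩ := exists_mem_Rk_notMem_Rk (Nat.one_le_iff_ne_zero.mp hl) hkl.symm v u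
    exact ⟨w, hu, hv⟩
  · exact exists_notMem_Rk_notMem_Rk k l u v
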